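/- arXiv:math/0608772 — 2 statements merged into one kernel-verified Lean document; each statement's English description precedes it below -/
import Mathlib

section
/- Let Ω ⊆ ℂ be a domain that is not simply connected. Then there do not exist holomorphic functions φ : D → Ω and ψ : Ω → D such that ψ ∘ φ is the identity map of D; i.e., the identity of the unit disc cannot be factored holomorphically through a non-simply-connected planar domain. -/
/-!
Suppose `ψ ∘ φ = id` on the disc `D`. Then `φ ∘ ψ` is a holomorphic self-map of `Ω` fixing every
point of `φ(D)`. As `φ` is continuous and injective, the points `φ z` with `z → 0`, `z ≠ 0`,
accumulate at `φ 0 ∈ Ω`, so the identity theorem gives `φ ∘ ψ = id` on all of the connected open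
set `Ω`. Hence `φ` and `ψ` are inverse homeomorphisms between `D` and `Ω`. Since `D` is convex, it is
contractible, so `Ω` is contractible and therefore simply connected.
-/

open Complex Set

/-- If `ψ ∘ φ = id` on the disc and `Ω` is open and connected, then also `φ ∘ ψ = id` on `Ω`. This is
the identity theorem applied to `φ ∘ ψ` and `id` near `φ 0`. -/
theorem comp_eq_id_of_retraction {Ω : Set ℂ} (hΩopen : IsOpen Ω) (hΩconn : IsConnected Ω)
    {φ ψ : ℂ → ℂ} (hφ : DifferentiableOn ℂ φ (Metric.ball (0 : ℂ) 1))
    (hφm : MapsTo φ (Metric.ball (0 : ℂ) 1) Ω) (hψ : DifferentiableOn ℂ ψ Ω)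
    (hψm : MapsTo ψ Ω (Metric.ball (0 : ℂ) 1))
    (h : ∀ z ∈ Metric.ball (0 : ℂ) 1, ψ (φ z) = z) : EqOn (φ ∘ ψ) id Ω := by
  have h0 : (0 : ℂ) ∈ Metric.ball (0 : ℂ) 1 := by simp
  have hball : ∀ᶠ z in nhdsWithin (0 : ℂ) {0}ᶜ, z ∈ Metric.ball (0 : ℂ) 1 :=
    mem_nhdsWithin_of_mem_nhds (Metric.isOpen_ball.mem_nhds h0)
  refine ((hφ.comp hψ hψm).analyticOnNhd hΩopen).eqOn_of_preconnected_of_frequently_eq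
    analyticOnNhd_id hΩconn.isPreconnected (hφm h0) ?_
  have ht : Filter.Tendsto φ (nhdsWithin 0 {0}ᶜ) (nhdsWithin (φ 0) {φ 0}ᶜ) := by
    refine tendsto_nhdsWithin_iff.2 ⟨?_, ?_⟩
    · exact (hφ.continuousOn.continuousAt (Metric.isOpen_ball.mem_nhds h0)).tendsto.mono_left
        nhdsWithin_le_nhds
    · filter_upwards [hball, self_mem_nhdsWithin] with z hz hz0 heq
      -- `φ` is injective on the disc because it has the left inverse `ψ`.
      refine hz0 ?_
      have heq' : φ z = φ 0 := heq
      rw [mem_singleton_iff, ← h z hz, heq', h 0 h0]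
  refine ht.frequently (Filter.Eventually.frequently ?_)
  filter_upwards [hball] with z hz
  simp [h z hz]

theorem no_holomorphic_factorization_of_id
    (Ω : Set ℂ) (hΩopen : IsOpen Ω) (hΩconn : IsConnected Ω)
    (hΩnsc : ¬ SimplyConnectedSpace ↥Ω) :
    ¬ ∃ (φ ψ : ℂ → ℂ),
        DifferentiableOn ℂ φ (Metric.ball (0 : ℂ) 1) ∧
        MapsTo φ (Metric.ball (0 : ℂ) 1) Ω ∧
        DifferentiableOn ℂ ψ Ω ∧
        MapsTo ψ Ω (Metric.ball (0 : ℂ) 1) ∧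
        ∀ z ∈ Metric.ball (0 : ℂ) 1, ψ (φ z) = z := by
  rintro ⟨φ, ψ, hφ, hφm, hψ, hψm, h⟩
  have hid := comp_eq_id_of_retraction hΩopen hΩconn hφ hφm hψ hψm h
  let e : Ω ≃ₜ Metric.ball (0 : ℂ) 1 :=
    { toFun := hψm.restrict
      invFun := hφm.restrict
      left_inv := fun w => Subtype.ext (hid w.2)
      right_inv := fun z => Subtype.ext (h z z.2)
      continuous_toFun := hψ.continuousOn.mapsToRestrict hψm
      continuous_invFun := hφ.continuousOn.mapsToRestrict hφm }
  have : ContractibleSpace (Metric.ball (0 : ℂ) 1) :=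
    (convex_ball (0 : ℂ) 1).contractibleSpace ⟨0, by simp⟩
  have : ContractibleSpace Ω := e.contractibleSpace
  exact hΩnsc inferInstance
end

section
/- (Farkas–Ritt / Earle–Hamilton fixed-point theorem on the disc.) Let f : D → D be holomorphic and assume that the image M = { f(z) : z ∈ D } has compact closure contained in D. Then there exists a unique point P ∈ D such that f(P) = P. -/
/-!
A holomorphic self-map of the disc whose image lies in a compact subset `K` of the disc strictly
decreases the pseudo-hyperbolic distance `ρ z w = |z - w| / |1 - conj w * z|`: conjugating by disc
automorphisms that send `w` and `f w` to `0` gives a map fixing `0` whose values have modulus at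
most some `s < 1`, and the Schwarz lemma bounds it by `s * |z|` (`norm_mobius_lt`). Strict
contraction gives uniqueness at once. For existence, `z ↦ ρ z (f z)` attains its minimum on
`K = closure (f '' D)`; since `f` maps `K` into itself, a minimiser that is not fixed would be
improved by its own image.
-/

open Complex Set

/-- The disc automorphism `z ↦ (z + a) / (1 + conj a * z)`, for `‖a‖ < 1`; it sends `0` to `a` and
`-a` to `0`. The pseudo-hyperbolic distance from `z` to `w` is `‖mobius (-w) z‖`. -/
noncomputable def mobius (a z : ℂ) : ℂ := (z + a) / (1 + (starRingEnd ℂ) a * z)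

lemma mobius_den_ne {a z : ℂ} (ha : ‖a‖ < 1) (hz : ‖z‖ < 1) :
    1 + (starRingEnd ℂ) a * z ≠ 0 := by
  intro h
  have h1 : (starRingEnd ℂ) a * z = -1 := by linear_combination h
  have h2 : ‖a‖ * ‖z‖ = 1 := by
    have := congrArg norm h1
    simpa using this
  nlinarith [norm_nonneg a, norm_nonneg z]

lemma norm_mobius_lt_one {a z : ℂ} (ha : ‖a‖ < 1) (hz : ‖z‖ < 1) : ‖mobius a z‖ < 1 := by
  have hd := norm_pos_iff.mpr (mobius_den_ne ha hz)
  rw [mobius, norm_div, div_lt_one hd]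
  have key : ‖1 + (starRingEnd ℂ) a * z‖ ^ 2 - ‖z + a‖ ^ 2
      = (1 - ‖a‖ ^ 2) * (1 - ‖z‖ ^ 2) := by
    simp only [Complex.sq_norm, Complex.normSq_apply, Complex.add_re, Complex.add_im,
      Complex.mul_re, Complex.mul_im, Complex.conj_re, Complex.conj_im, Complex.one_re,
      Complex.one_im]
    ring
  have hpos : 0 < (1 - ‖a‖ ^ 2) * (1 - ‖z‖ ^ 2) := by
    apply mul_pos <;> nlinarith [norm_nonneg a, norm_nonneg z]
  exact lt_of_pow_lt_pow_left₀ 2 hd.le (by linarith)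

lemma mobius_mobius_neg {a z : ℂ} (ha : ‖a‖ < 1) (hz : ‖z‖ < 1) :
    mobius a (mobius (-a) z) = z := by
  have ha' : ‖-a‖ < 1 := by simpa using ha
  have h1 := mobius_den_ne ha' hz
  have h2 := mobius_den_ne ha (norm_mobius_lt_one ha' hz)
  have h3 : mobius (-a) z * (1 + (starRingEnd ℂ) (-a) * z) = z + -a := div_mul_cancel₀ _ h1
  rw [mobius, div_eq_iff h2]
  rw [map_neg] at h3
  linear_combination h3

lemma mobius_neg_self (a : ℂ) : mobius (-a) a = 0 := by simp [mobius]

lemma mobius_zero (a : ℂ) : mobius a 0 = a := by simp [mobius]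

lemma differentiableOn_mobius {a : ℂ} (ha : ‖a‖ < 1) :
    DifferentiableOn ℂ (mobius a) (Metric.ball 0 1) := by
  intro z hz
  have hz' : ‖z‖ < 1 := by simpa using hz
  have : DifferentiableAt ℂ (fun z => (z + a) / (1 + (starRingEnd ℂ) a * z)) z :=
    DifferentiableAt.div (by fun_prop) (by fun_prop) (mobius_den_ne ha hz')
  exact this.differentiableWithinAt

/-- Strict Schwarz–Pick inequality for maps with relatively compact image. -/
lemma norm_mobius_lt {f : ℂ → ℂ}
    (hf : DifferentiableOn ℂ f (Metric.ball (0 : ℂ) 1))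
    (hcompact : IsCompact (closure (f '' Metric.ball (0 : ℂ) 1)))
    (hclosure : closure (f '' Metric.ball (0 : ℂ) 1) ⊆ Metric.ball (0 : ℂ) 1)
    {z w : ℂ} (hz : ‖z‖ < 1) (hw : ‖w‖ < 1) (hzw : z ≠ w) :
    ‖mobius (-f w) (f z)‖ < ‖mobius (-w) z‖ := by
  have hmem : ∀ x : ℂ, ‖x‖ < 1 → f x ∈ closure (f '' Metric.ball (0 : ℂ) 1) := fun x hx =>
    subset_closure (mem_image_of_mem f (by simpa using hx))
  have hlt : ∀ x : ℂ, ‖x‖ < 1 → ‖f x‖ < 1 := fun x hx => by simpa using hclosure (hmem x hx)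
  have hfw : ‖-f w‖ < 1 := by simpa using hlt w hw
  have hw' : ‖-w‖ < 1 := by simpa using hw
  have hmd := differentiableOn_mobius hfw
  obtain ⟨x, hx, hmax⟩ := hcompact.exists_isMaxOn ⟨f w, hmem w hw⟩
    (hmd.continuousOn.mono hclosure).norm
  have hs : ‖mobius (-f w) x‖ < 1 := norm_mobius_lt_one hfw (by simpa using hclosure hx)
  have hmw : MapsTo (mobius w) (Metric.ball 0 1) (Metric.ball 0 1) := fun y hy => by
    simpa using norm_mobius_lt_one hw (by simpa using hy)
  have hfm : MapsTo f (Metric.ball 0 1) (Metric.ball 0 1) := fun y hy => by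
    simpa using hlt y (by simpa using hy)
  have hg : DifferentiableOn ℂ (fun y => mobius (-f w) (f (mobius w y))) (Metric.ball 0 1) :=
    hmd.comp (hf.comp (differentiableOn_mobius hw) hmw) (hfm.comp hmw)
  have h0 : mobius (-f w) (f (mobius w 0)) = 0 := by rw [mobius_zero, mobius_neg_self]
  have hgm : MapsTo (fun y => mobius (-f w) (f (mobius w y))) (Metric.ball 0 1)
      (Metric.closedBall (mobius (-f w) (f (mobius w 0))) ‖mobius (-f w) x‖) := fun y hy => by
    rw [h0, mem_closedBall_zero_iff]
    exact hmax (hmem _ (by simpa using hmw hy))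
  have hy : ‖mobius (-w) z‖ < 1 := norm_mobius_lt_one hw' hz
  have hS := dist_le_div_mul_dist_of_mapsTo_ball hg hgm
    (show mobius (-w) z ∈ Metric.ball 0 1 by simpa using hy)
  simp only [h0, mobius_mobius_neg hw hz, dist_zero_right, div_one] at hS
  have hpos : 0 < ‖mobius (-w) z‖ := by
    refine norm_pos_iff.mpr fun h => hzw ?_
    have := mobius_mobius_neg hw hz
    rw [h, mobius_zero] at this
    exact this.symm
  exact hS.trans_lt (mul_lt_of_lt_one_left hpos hs)

/-- **Farkas–Ritt / Earle–Hamilton fixed-point theorem on the disc.**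
Let `f` be a holomorphic self-map of the unit disc `D` whose image `f(D)` has compact closure
contained in `D`. Then `f` has a unique fixed point in `D`. -/
theorem farkas_ritt_fixed_point
    (f : ℂ → ℂ)
    (hf : DifferentiableOn ℂ f (Metric.ball (0 : ℂ) 1))
    (hmaps : MapsTo f (Metric.ball (0 : ℂ) 1) (Metric.ball (0 : ℂ) 1))
    (hcompact : IsCompact (closure (f '' Metric.ball (0 : ℂ) 1)))
    (hclosure : closure (f '' Metric.ball (0 : ℂ) 1) ⊆ Metric.ball (0 : ℂ) 1) :
    ∃! P : ℂ, P ∈ Metric.ball (0 : ℂ) 1 ∧ f P = P := by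
  have hmem : ∀ x ∈ Metric.ball (0 : ℂ) 1, f x ∈ closure (f '' Metric.ball (0 : ℂ) 1) :=
    fun x hx => subset_closure (mem_image_of_mem f hx)
  have hcont : ContinuousOn (fun z => ‖mobius (-f z) z‖) (Metric.ball 0 1) := by
    have hfc := hf.continuousOn
    unfold mobius
    refine (ContinuousOn.div (by fun_prop) ?_ ?_).norm
    · exact continuousOn_const.add
        ((Complex.continuous_conj.comp_continuousOn hfc.neg).mul continuousOn_id)
    · intro z hz
      exact mobius_den_ne (by simpa using hmaps hz) (by simpa using hz)
  obtain ⟨P, hPK, hmin⟩ := hcompact.exists_isMinOn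
    ⟨f 0, hmem 0 (by simp)⟩ (hcont.mono hclosure)
  have hP := hclosure hPK
  have hfix : f P = P := by
    by_contra hne
    have h1 : ‖mobius (-f (f P)) (f P)‖ < ‖mobius (-f P) P‖ :=
      norm_mobius_lt hf hcompact hclosure (by simpa using hP) (by simpa using hmaps hP)
        (Ne.symm hne)
    exact absurd (hmin (hmem P hP)) (not_le.mpr h1)
  refine ⟨P, ⟨hP, hfix⟩, ?_⟩
  rintro Q ⟨hQ, hQfix⟩
  by_contra hne
  have h := norm_mobius_lt hf hcompact hclosure (by simpa using hQ) (by simpa using hP) hne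
  rw [hfix, hQfix] at h
  exact lt_irrefl _ h
end
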